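/- Let 𝒫 ⊂ ℝ^d be a polytope of dimension d ≥ 3 and let x be a point in the exterior of 𝒫 (i.e. x ∉ 𝒫). Then the following are equivalent: (i) for every line L through x that meets two disjoint faces F and G of 𝒫 at points u ∈ F and v ∈ G, at least one of u and v lies in the relative interior of a facet of 𝒫; (ii) x does not lie on the affine hull of any facet of 𝒫, and either x is beyond all facets of 𝒫 except exactly one, or x is beneath all facets of 𝒫 except exactly one. -/

import Mathlib

namespace BoydMaxwell

variable {E : Type*} [NormedAddCommGroup E] [NormedSpace ℝ E]

/-- A facet of the polytope `P`: an exposed face whose affine span has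
codimension `1` (i.e. dimension `dim E − 1`). -/
def IsFacet (P F : Set E) : Prop :=
  IsExposed ℝ P F ∧
    Module.finrank ℝ (affineSpan ℝ F).direction + 1 = Module.finrank ℝ E

/-- `x` is beyond the facet `F` of `P`: `x` and the interior of `P` lie
strictly on opposite sides of the affine hull of `F`. -/
def Beyond (P F : Set E) (x : E) : Prop :=
  ∀ y ∈ interior P, (affineSpan ℝ F).SOppSide x y

/-- `x` is beneath the facet `F` of `P`: `x` and the interior of `P` lie
strictly on the same side of the affine hull of `F`. -/
def Beneath (P F : Set E) (x : E) : Prop :=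
  ∀ y ∈ interior P, (affineSpan ℝ F).SSameSide x y

section Env

open Set Filter Topology

variable {V : Type*} [NormedAddCommGroup V] [NormedSpace ℝ V]

/-- `f` is the pointwise maximum of the affine functions `A i + a i`. -/
structure IsEnv {ι : Type*} (A : ι → V →L[ℝ] ℝ) (a : ι → ℝ) (f : V → ℝ) : Prop where
  cont : Continuous f
  le : ∀ i q, A i q + a i ≤ f q
  ex : ∀ q, ∃ i, A i q + a i = f q

/-- At `q` the maximum is attained twice. -/
def Crease {ι : Type*} (A : ι → V →L[ℝ] ℝ) (a : ι → ℝ) (f : V → ℝ) (q : V) : Prop :=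
  ∃ i k, i ≠ k ∧ A i q + a i = f q ∧ A k q + a k = f q

variable {ι : Type*} {A : ι → V →L[ℝ] ℝ} {a : ι → ℝ} {f : V → ℝ}

lemma IsEnv.convexOn (h : IsEnv A a f) : ConvexOn ℝ univ f := by
  refine ⟨convex_univ, fun x _ y _ s t hs ht hst => ?_⟩
  obtain ⟨i, hi⟩ := h.ex (s • x + t • y)
  have h1 := mul_le_mul_of_nonneg_left (h.le i x) hs
  have h2 := mul_le_mul_of_nonneg_left (h.le i y) ht
  rw [← hi]
  simp only [map_add, map_smul, smul_eq_mul]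
  have : a i = s * a i + t * a i := by rw [← add_mul, hst, one_mul]
  linarith

lemma affine_convexOn (L : V →L[ℝ] ℝ) (c : ℝ) : ConvexOn ℝ univ (fun y => L y + c) := by
  refine ⟨convex_univ, fun x _ y _ s t hs ht hst => ?_⟩
  simp only [map_add, map_smul, smul_eq_mul]
  have : c = s * c + t * c := by rw [← add_mul, hst, one_mul]
  linarith

lemma Crease.closed [Finite ι] (h : IsEnv A a f) : IsClosed {q | Crease A a f q} := by
  have hc := h.cont
  have : {q | Crease A a f q} =
      ⋃ i, ⋃ k, {q | i ≠ k ∧ A i q + a i = f q ∧ A k q + a k = f q} := by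
    ext q; simp [Crease]
  rw [this]
  refine isClosed_iUnion_of_finite fun i => isClosed_iUnion_of_finite fun k => ?_
  by_cases hik : i = k
  · simp [hik]
  · simp only [ne_eq, hik, not_false_eq_true, true_and]
    exact (isClosed_eq (by fun_prop) hc).inter (isClosed_eq (by fun_prop) hc)

/-- On a connected set without creases only one function is active. -/
lemma single_of_preconnected [Finite ι] (h : IsEnv A a f) {S : Set V} (hS : IsPreconnected S)
    (hcr : ∀ q ∈ S, ¬ Crease A a f q) {z : V} (hz : z ∈ S) {i : ι} (hi : A i z + a i = f z)
    {y : V} (hy : y ∈ S) : A i y + a i = f y := by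
  have hc := h.cont
  by_contra hne
  have h1 : IsClosed {q | A i q + a i = f q} := isClosed_eq (by fun_prop) hc
  have h2 : IsClosed (⋃ k, {q | k ≠ i ∧ A k q + a k = f q}) := by
    refine isClosed_iUnion_of_finite fun k => ?_
    by_cases hik : k = i
    · simp [hik]
    · simp only [ne_eq, hik, not_false_eq_true, true_and]
      exact isClosed_eq (by fun_prop) hc
  have key := isPreconnected_closed_iff.1 hS _ _ h1 h2 (fun q _ => by
    obtain ⟨k, hk⟩ := h.ex q
    by_cases hki : k = i
    · left; subst hki; exact hk
    · right; exact mem_iUnion.2 ⟨k, hki, hk⟩) ⟨z, hz, hi⟩ (by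
    obtain ⟨k, hk⟩ := h.ex y
    refine ⟨y, hy, mem_iUnion.2 ⟨k, ?_, hk⟩⟩
    rintro rfl; exact hne hk)
  obtain ⟨q, hq, hq1, hq2⟩ := key
  obtain ⟨k, hki, hk⟩ := mem_iUnion.1 hq2
  exact hcr q hq ⟨k, i, hki, hk, hq1⟩

/-- Near a non-crease point, `f` is affine. -/
lemma eventually_of_not_crease [Finite ι] (h : IsEnv A a f) {q : V} (hq : ¬ Crease A a f q)
    {i : ι} (hi : A i q + a i = f q) : ∀ᶠ y in 𝓝 q, f y = A i y + a i := by
  have : ∀ k, ∀ᶠ y in 𝓝 q, A k y + a k ≤ A i y + a i := by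
    intro k
    by_cases hki : k = i
    · subst hki; simp
    · have : A k q + a k < A i q + a i := by
        refine lt_of_le_of_ne (hi ▸ h.le k q) fun he => hq ⟨k, i, hki, he.trans hi, hi⟩
      have h1 : ContinuousAt (fun y => A k y + a k) q := by fun_prop
      have h2 : ContinuousAt (fun y => A i y + a i) q := by fun_prop
      exact (h1.eventually_lt h2 this).mono fun _ => le_of_lt
  filter_upwards [eventually_all.2 this] with y hy
  obtain ⟨k, hk⟩ := h.ex y
  exact le_antisymm (hk ▸ hy k) (h.le i y)

lemma exists_crease [Finite ι] [Nontrivial ι] (h : IsEnv A a f) {S : Set V} (hS : IsPreconnected S)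
    (hirr : ∀ i, ∃ q ∈ S, ∀ k, k ≠ i → A k q + a k < A i q + a i) : ∃ q ∈ S, Crease A a f q := by
  by_contra! hcon
  obtain ⟨i, k, hik⟩ := exists_pair_ne ι
  obtain ⟨z, hz, hzi⟩ := hirr i
  obtain ⟨y, hy, hyk⟩ := hirr k
  obtain ⟨j, hj⟩ := h.ex z
  have hji : j = i := by
    by_contra hne
    have := hzi j hne
    have := h.le i z
    linarith
  subst hji
  have := single_of_preconnected h hS hcon hz hj hy
  have := hyk j hik
  have := h.le k y
  linarith

variable {κ : Type*} {B : κ → V →L[ℝ] ℝ} {b : κ → ℝ} {g : V → ℝ}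

lemma exists_ne_zero_ker [FiniteDimensional ℝ V] (hV : 2 ≤ Module.finrank ℝ V) (ψ : V →L[ℝ] ℝ) :
    ∃ e : V, e ≠ 0 ∧ ψ e = 0 := by
  have : LinearMap.ker (ψ : V →ₗ[ℝ] ℝ) ≠ ⊥ :=
    LinearMap.ker_ne_bot_of_finrank_lt (by rw [Module.finrank_self]; omega)
  obtain ⟨e, he, hne⟩ := Submodule.exists_mem_ne_zero_of_ne_bot this
  exact ⟨e, hne, by simpa using he⟩

/-- The creases of `f` reach the global minimum of `f + g`. -/
lemma crease_min [FiniteDimensional ℝ V] (hV : 2 ≤ Module.finrank ℝ V) [Finite ι] [Finite κ]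
    (hf : IsEnv A a f) (hg : IsEnv B b g)
    (hb : Bornology.IsBounded {q | f q + g q ≤ 0})
    (hno : ∀ q, f q + g q < 0 → Crease A a f q → Crease B b g q → False)
    (hex : ∃ q, f q + g q < 0 ∧ Crease A a f q) :
    ∃ q, f q + g q < 0 ∧ Crease A a f q ∧ ∀ y, f q + g q ≤ f y + g y := by
  have hfc := hf.cont
  have hgc := hg.cont
  have hkconv : ConvexOn ℝ univ (fun y => f y + g y) := hf.convexOn.add hg.convexOn
  have hcomp : IsCompact ({q | f q + g q ≤ 0} ∩ {q | Crease A a f q}) := by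
    refine Metric.isCompact_of_isClosed_isBounded
      ((isClosed_le (by fun_prop) (by fun_prop)).inter (Crease.closed hf)) (hb.subset inter_subset_left)
  obtain ⟨q0, hq0, hq0c⟩ := hex
  obtain ⟨q, ⟨hq1, hqc⟩, hqmin⟩ := hcomp.exists_isMinOn ⟨q0, hq0.le, hq0c⟩
    (f := fun y => f y + g y) (by fun_prop)
  have hqneg : f q + g q < 0 := (hqmin (a := q0) ⟨hq0.le, hq0c⟩).trans_lt hq0
  refine ⟨q, hqneg, hqc, ?_⟩
  by_contra! hz
  obtain ⟨z, hz⟩ := hz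
  set m := f q + g q with hm
  have h1 : ∀ p, f p + g p < m → ¬ Crease A a f p := by
    intro p hp hc
    have h0 : m ≤ f p + g p := hqmin (a := p) ⟨(hp.trans hqneg).le, hc⟩
    linarith
  obtain ⟨i, hi⟩ := hf.ex z
  have hSconv : Convex ℝ {p | f p + g p < m} := by
    simpa using hkconv.convex_lt m
  have h2 : ∀ p, f p + g p < m → A i p + a i = f p := fun p hp =>
    single_of_preconnected hf hSconv.isPreconnected h1 hz hi hp
  have hseg : ∀ p, ∀ t : ℝ, 0 ≤ t → t < 1 → f p + g p ≤ m →
      f ((1 - t) • z + t • p) + g ((1 - t) • z + t • p) < m := by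
    intro p t h0 h1 hp
    have := hkconv.2 (mem_univ z) (mem_univ p) (by linarith : 0 ≤ 1 - t) h0 (by ring)
    simp only [smul_eq_mul] at this
    nlinarith
  have h3 : ∀ p, f p + g p ≤ m → A i p + a i = f p := by
    intro p hp
    have hcl : IsClosed {y | A i y + a i = f y} := isClosed_eq (by fun_prop) hfc
    have htend : Tendsto (fun t : ℝ => (1 - t) • z + t • p) (𝓝[<] 1) (𝓝 p) := by
      have : Continuous (fun t : ℝ => (1 - t) • z + t • p) := by fun_prop
      have := this.tendsto 1
      simp only [sub_self, zero_smul, one_smul, zero_add] at this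
      exact this.mono_left nhdsWithin_le_nhds
    refine hcl.mem_of_tendsto htend ?_
    have h01 : ∀ᶠ t : ℝ in 𝓝[<] 1, 0 < t :=
      nhdsWithin_le_nhds (lt_mem_nhds (by norm_num))
    filter_upwards [h01, self_mem_nhdsWithin] with t ht0 ht1
    exact h2 _ (hseg p t ht0.le ht1 hp)
  have h4 : ∀ y, A i y + a i + g y ≤ m → f y + g y ≤ m := by
    intro y hy
    by_contra! hlt
    have hcont : ContinuousOn (fun t : ℝ => f ((1 - t) • z + t • y) + g ((1 - t) • z + t • y))
        (Icc 0 1) := by fun_prop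
    have := intermediate_value_Icc (zero_le_one) hcont
    obtain ⟨t, ⟨ht0, ht1⟩, ht⟩ := this (show m ∈ Icc _ _ by
      constructor <;> simp <;> linarith)
    simp only at ht
    have ht1' : t < 1 := by
      refine lt_of_le_of_ne ht1 ?_
      rintro rfl
      simp at ht; linarith
    have e1 := h3 _ ht.le
    have e2 := ((affine_convexOn (A i) (a i)).add hg.convexOn).2 (mem_univ z) (mem_univ y)
      (by linarith : 0 ≤ 1 - t) ht0 (by ring)
    simp only [smul_eq_mul, Pi.add_apply] at e2
    rw [e1, ht] at e2
    have e3 : A i z + a i + g z < m := by rw [hi]; exact hz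
    nlinarith
  have hiq : A i q + a i = f q := h3 q le_rfl
  obtain ⟨k2, hk2i, hk2⟩ : ∃ k, k ≠ i ∧ A k q + a k = f q := by
    obtain ⟨k, l, hkl, hk, hl⟩ := hqc
    by_cases hki : k = i
    · exact ⟨l, fun h => hkl (hki.trans h.symm), hl⟩
    · exact ⟨k, hki, hk⟩
  obtain ⟨j, hj⟩ := hg.ex q
  obtain ⟨e, he0, he⟩ := exists_ne_zero_ker hV (A i + B j)
  replace he : A i e + B j e = 0 := by simpa using he
  have hopen : ∀ t : ℝ, f (q + t • e) + g (q + t • e) ≤ m →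
      A k2 (q + t • e) + a k2 = f (q + t • e) →
      ∀ᶠ r in 𝓝 t, f (q + r • e) + g (q + r • e) ≤ m := by
    intro t ht htk
    have e1 := h3 _ ht
    have e2 := hg.le j (q + t • e)
    have e0 : ∀ r : ℝ, A i (q + r • e) + a i + (B j (q + r • e) + b j) = m := by
      intro r
      simp only [map_add, map_smul, smul_eq_mul]
      have : r * A i e + r * B j e = 0 := by rw [← mul_add, he, mul_zero]
      linarith
    have e3 : B j (q + t • e) + b j = g (q + t • e) := by
      have := e0 t
      linarith
    have hncr : ¬ Crease B b g (q + t • e) := fun hc =>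
      hno _ (ht.trans_lt hqneg) ⟨k2, i, hk2i, htk, e1⟩ hc
    have hev := eventually_of_not_crease hg hncr e3
    have hcont : Tendsto (fun r : ℝ => q + r • e) (𝓝 t) (𝓝 (q + t • e)) :=
      Continuous.tendsto (by fun_prop) t
    filter_upwards [hcont.eventually hev] with r hr
    apply h4
    rw [hr, e0 r]
  have hAe : A k2 e = A i e := by
    have h0 := hopen 0 (by simp [hm]) (by simpa using hk2)
    obtain ⟨ε, hε, hball⟩ := Metric.eventually_nhds_iff.1 h0
    have p1 := hball (y := ε / 2) (by simp [abs_of_pos hε]; linarith)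
    have p2 := hball (y := -(ε / 2)) (by simp [abs_of_pos hε]; linarith)
    have q1 := h3 _ p1
    have q2 := h3 _ p2
    have r1 := hf.le k2 (q + (ε / 2) • e)
    have r2 := hf.le k2 (q + (-(ε / 2)) • e)
    rw [← q1] at r1
    rw [← q2] at r2
    simp only [map_add, map_smul, smul_eq_mul] at r1 r2
    nlinarith
  have hTopen : IsOpen {t : ℝ | f (q + t • e) + g (q + t • e) ≤ m} := by
    rw [isOpen_iff_mem_nhds]
    intro t ht
    refine hopen t ht ?_
    rw [← h3 _ ht]
    simp only [map_add, map_smul, smul_eq_mul, hAe]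
    linarith
  have hTclosed : IsClosed {t : ℝ | f (q + t • e) + g (q + t • e) ≤ m} :=
    isClosed_le (by fun_prop) (by fun_prop)
  have huniv := IsClopen.eq_univ ⟨hTclosed, hTopen⟩ ⟨0, by simp [hm]⟩
  obtain ⟨R, hR⟩ := hb.exists_norm_le
  have hepos : 0 < ‖e‖ := norm_pos_iff.2 he0
  have hmem : ((R + ‖q‖ + 1) / ‖e‖) ∈ {t : ℝ | f (q + t • e) + g (q + t • e) ≤ m} := by
    rw [huniv]; trivial
  have hRR := hR _ (le_trans hmem hqneg.le)
  have hR0 : 0 ≤ R := (norm_nonneg _).trans hRR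
  have htri : ‖((R + ‖q‖ + 1) / ‖e‖) • e‖ ≤ ‖q + ((R + ‖q‖ + 1) / ‖e‖) • e‖ + ‖q‖ := by
    have := norm_sub_le (q + ((R + ‖q‖ + 1) / ‖e‖) • e) q
    simpa using this
  rw [norm_smul, Real.norm_of_nonneg (by positivity), div_mul_cancel₀ _ hepos.ne'] at htri
  linarith

lemma frontier_preconnected [FiniteDimensional ℝ V] (hV : 2 ≤ Module.finrank ℝ V) {S : Set V}
    (hc : Convex ℝ S) (hne : (interior S).Nonempty) (hb : Bornology.IsBounded S) :
    IsPreconnected (frontier S) := by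
  obtain ⟨h, -, -, h3⟩ := exists_homeomorph_image_interior_closure_frontier_eq_unitBall hc hne hb
  have : frontier S = h.symm '' Metric.sphere 0 1 := by
    rw [← h3, ← Set.image_comp]; simp
  rw [this]
  refine IsPreconnected.image (isPreconnected_sphere ?_ _ _) _ h.symm.continuous.continuousOn
  rw [← Module.finrank_eq_rank]
  exact_mod_cast hV

lemma global_min_of_local {φ : V → ℝ} (hφ : ConvexOn ℝ univ φ) {q : V}
    (h : ∀ᶠ y in 𝓝 q, φ q ≤ φ y) (y : V) : φ q ≤ φ y :=
  IsMinOn.of_isLocalMin_of_convex_univ (f := φ) h hφ y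

lemma noint (hf : IsEnv A a f)
    (hA : ∀ i, ∃ q : V, ∀ k, k ≠ i → A k q + a k < A i q + a i) (i : ι) (q : V)
    (hloc : ∀ᶠ y in 𝓝 q, f y ≤ A i y + a i) (hc : Crease A a f q) : False := by
  have hiq : A i q + a i = f q := le_antisymm (hf.le i q) hloc.self_of_nhds
  obtain ⟨k2, hk2i, hk2⟩ : ∃ k, k ≠ i ∧ A k q + a k = f q := by
    obtain ⟨k, l, hkl, hk, hl⟩ := hc
    by_cases hki : k = i
    · exact ⟨l, fun h => hkl (hki.trans h.symm), hl⟩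
    · exact ⟨k, hki, hk⟩
  obtain ⟨y, hy⟩ := hA k2
  have := hy i hk2i.symm
  have h2 := global_min_of_local (affine_convexOn (A i - A k2) (a i - a k2)) (q := q) (by
    filter_upwards [hloc] with y hy
    have := hf.le k2 y
    simp only [sub_apply]
    linarith) y
  simp only [sub_apply] at h2
  linarith

/-- Two envelopes have a common crease point. -/
lemma exists_common_crease [FiniteDimensional ℝ V] (hV : 2 ≤ Module.finrank ℝ V)
    [Finite ι] [Finite κ] [Nontrivial ι] [Nontrivial κ]
    (hf : IsEnv A a f) (hg : IsEnv B b g)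
    (hb : Bornology.IsBounded {q | f q + g q ≤ 0})
    (hA : ∀ i, ∃ q ∈ {q | f q + g q < 0}, ∀ k, k ≠ i → A k q + a k < A i q + a i)
    (hB : ∀ i, ∃ q ∈ {q | f q + g q < 0}, ∀ k, k ≠ i → B k q + b k < B i q + b i) :
    ∃ q, f q + g q < 0 ∧ Crease A a f q ∧ Crease B b g q := by
  by_contra! hcon
  have hfc := hf.cont
  have hgc := hg.cont
  have hkconv : ConvexOn ℝ univ (fun y => f y + g y) := hf.convexOn.add hg.convexOn
  have hSconv : IsPreconnected {p | f p + g p < 0} := by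
    have : Convex ℝ {p | f p + g p < 0} := by simpa using hkconv.convex_lt 0
    exact this.isPreconnected
  obtain ⟨q, hq0, hqc, hqmin⟩ := crease_min hV hf hg hb (fun q h1 h2 h3 => hcon q h1 h2 h3)
    (exists_crease hf hSconv hA)
  obtain ⟨q', hq0', hqc', hqmin'⟩ := crease_min hV hg hf (by simpa only [add_comm] using hb)
    (fun q h1 h2 h3 => hcon q (by linarith) h3 h2)
    (by
      obtain ⟨y, hy, hyc⟩ := exists_crease hg hSconv hB
      have hy : f y + g y < 0 := hy
      exact ⟨y, by linarith, hyc⟩)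
  set M := f q + g q with hM
  have hM' : f q' + g q' = M := le_antisymm (by linarith [hqmin' q]) (hqmin q')
  have hqn : ¬ Crease B b g q := hcon q hq0 hqc
  have hqn' : ¬ Crease A a f q' := fun h => hcon q' (by linarith) h hqc'
  obtain ⟨j, hj⟩ := hg.ex q
  obtain ⟨i, hi⟩ := hf.ex q'
  have hgloc := eventually_of_not_crease hg hqn hj
  have hfloc := eventually_of_not_crease hf hqn' hi
  have hfge : ∀ y, M ≤ f y + (B j y + b j) := by
    intro y
    have := global_min_of_local (hf.convexOn.add (affine_convexOn (B j) (b j))) (q := q) (by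
      filter_upwards [hgloc] with y hy
      have := hqmin y
      simp only [Pi.add_apply]
      linarith) y
    simp only [Pi.add_apply] at this
    linarith
  have hgge : ∀ y, M ≤ g y + (A i y + a i) := by
    intro y
    have := global_min_of_local (hg.convexOn.add (affine_convexOn (A i) (a i))) (q := q') (by
      filter_upwards [hfloc] with y hy
      have := hqmin y
      simp only [Pi.add_apply]
      linarith) y
    simp only [Pi.add_apply] at this
    linarith
  have hj' : B j q' + b j = g q' := le_antisymm (hg.le j q') (by linarith [hfge q'])
  have hsum_ge : ∀ y, M ≤ (A i y + a i) + (B j y + b j) := by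
    intro y
    have := global_min_of_local ((affine_convexOn (A i) (a i)).add (affine_convexOn (B j) (b j)))
      (q := q') (by
      filter_upwards [hfloc] with y hy
      have := hfge y
      simp only [Pi.add_apply]
      linarith) y
    simp only [Pi.add_apply] at this
    linarith
  have hsum : ∀ y, (A i y + a i) + (B j y + b j) = M := by
    intro y
    refine le_antisymm ?_ (hsum_ge y)
    have := hsum_ge (q' + (q' - y))
    simp only [map_add, map_sub] at this
    linarith
  have hmem : ∀ y, f y + g y ≤ M ↔ f y ≤ A i y + a i ∧ g y ≤ B j y + b j := by
    intro y
    have := hsum y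
    constructor
    · intro h
      have := hfge y
      have := hgge y
      constructor <;> linarith
    · rintro ⟨h1, h2⟩; linarith
  have hSf : Convex ℝ {y | f y ≤ A i y + a i} := by
    have := (hf.convexOn.add (affine_convexOn (-A i) (-a i))).convex_le 0
    convert this using 1
    ext y; simp only [mem_ofPred_eq, Pi.add_apply, mem_univ, true_and]
    simp only [neg_apply]
    constructor <;> intro <;> linarith
  have hSg : Convex ℝ {y | g y ≤ B j y + b j} := by
    have := (hg.convexOn.add (affine_convexOn (-B j) (-b j))).convex_le 0
    convert this using 1
    ext y; simp only [mem_ofPred_eq, Pi.add_apply, mem_univ, true_and]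
    simp only [neg_apply]
    constructor <;> intro <;> linarith
  have hq'f : q' ∈ interior {y | f y ≤ A i y + a i} := by
    rw [mem_interior_iff_mem_nhds]
    filter_upwards [hfloc] with y hy using hy.le
  have hqg : q ∈ interior {y | g y ≤ B j y + b j} := by
    rw [mem_interior_iff_mem_nhds]
    filter_upwards [hgloc] with y hy using hy.le
  have hqq := (hmem q).1 le_rfl
  have hqq' := (hmem q').1 hM'.le
  set S := {y | f y + g y ≤ M} with hS
  have hSeq : S = {y | f y ≤ A i y + a i} ∩ {y | g y ≤ B j y + b j} := by
    ext y; exact hmem y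
  have hSint : (interior S).Nonempty := by
    refine ⟨(1/2 : ℝ) • q + (1/2 : ℝ) • q', ?_⟩
    rw [hSeq, interior_inter]
    constructor
    · exact hSf.combo_self_interior_mem_interior hqq.1 hq'f (by norm_num) (by norm_num) (by norm_num)
    · exact hSg.combo_interior_self_mem_interior hqg hqq'.2 (by norm_num) (by norm_num) (by norm_num)
  have hSc : IsClosed S := isClosed_le (by fun_prop) (by fun_prop)
  have hSb : Bornology.IsBounded S := hb.subset fun y hy => by
    have hy : f y + g y ≤ M := hy
    show f y + g y ≤ 0
    linarith
  have hpre := frontier_preconnected hV (hSeq ▸ hSf.inter hSg) hSint hSb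
  have key := isPreconnected_closed_iff.1 hpre _ _ (Crease.closed hf) (Crease.closed hg) (by
    intro p hp
    rw [hSc.frontier_eq] at hp
    by_contra hno
    simp only [mem_union, mem_ofPred_eq, not_or] at hno
    have hpm := (hmem p).1 hp.1
    have l1 := eventually_of_not_crease hf hno.1 (le_antisymm (hf.le i p) hpm.1)
    have l2 := eventually_of_not_crease hg hno.2 (le_antisymm (hg.le j p) hpm.2)
    apply hp.2
    rw [mem_interior_iff_mem_nhds]
    filter_upwards [l1, l2] with y h1 h2
    exact (hmem y).2 ⟨h1.le, h2.le⟩) (by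
    refine ⟨q, ?_, hqc⟩
    rw [hSc.frontier_eq]
    refine ⟨le_refl M, fun hInt => ?_⟩
    rw [hSeq, interior_inter, mem_inter_iff, mem_interior_iff_mem_nhds] at hInt
    refine noint hf (fun i => ?_) i q hInt.1 hqc
    obtain ⟨q, -, h⟩ := hA i
    exact ⟨q, h⟩) (by
    refine ⟨q', ?_, hqc'⟩
    rw [hSc.frontier_eq]
    refine ⟨hM'.le, fun hInt => ?_⟩
    rw [hSeq, interior_inter, mem_inter_iff, mem_interior_iff_mem_nhds, mem_interior_iff_mem_nhds]
      at hInt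
    refine noint hg (fun i => ?_) j q' hInt.2 hqc'
    obtain ⟨q, -, h⟩ := hB i
    exact ⟨q, h⟩)
  obtain ⟨p, hp, hp1, hp2⟩ := key
  rw [hSc.frontier_eq] at hp
  exact hcon p (lt_of_le_of_lt hp.1 hq0) hp1 hp2

lemma active_stable [Finite ι] (hf : IsEnv A a f) {q w : V}
    (hw : ∀ i, A i q + a i = f q → A i w + a i = f w) :
    ∀ᶠ t : ℝ in 𝓝 0, (∀ i, A i q + a i = f q → A i (q + t • (q - w)) + a i = f (q + t • (q - w))) := by
  obtain ⟨i, hi⟩ := hf.ex q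
  have hact : ∀ k, A k q + a k = f q → ∀ t : ℝ,
      A k (q + t • (q - w)) + a k = A i (q + t • (q - w)) + a i := by
    intro k hk t
    have h1 := hw k hk
    have h2 := hw i hi
    simp only [map_add, map_smul, map_sub, smul_eq_mul]
    have : A k q - A k w = A i q - A i w := by linarith
    rw [this]; linarith
  have hall : ∀ k, ∀ᶠ t : ℝ in 𝓝 0,
      A k (q + t • (q - w)) + a k ≤ A i (q + t • (q - w)) + a i := by
    intro k
    by_cases hk : A k q + a k = f q
    · exact Eventually.of_forall fun t => (hact k hk t).le
    · have hlt : A k q + a k < A i q + a i := hi ▸ lt_of_le_of_ne (hf.le k q) hk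
      have h1 : ContinuousAt (fun t : ℝ => A k (q + t • (q - w)) + a k) 0 := by fun_prop
      have h2 : ContinuousAt (fun t : ℝ => A i (q + t • (q - w)) + a i) 0 := by fun_prop
      exact (h1.eventually_lt h2 (by simpa using hlt)).mono fun _ => le_of_lt
  filter_upwards [eventually_all.2 hall] with t ht
  intro k hk
  rw [hact k hk]
  obtain ⟨l, hl⟩ := hf.ex (q + t • (q - w))
  exact le_antisymm (hf.le i _) (hl ▸ ht l)

/-- Common crease point with disjoint minimal faces. -/
lemma exists_disjoint_crease [FiniteDimensional ℝ V] (hV : 2 ≤ Module.finrank ℝ V)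
    [Finite ι] [Finite κ] [Nontrivial ι] [Nontrivial κ]
    (hf : IsEnv A a f) (hg : IsEnv B b g)
    (hb : Bornology.IsBounded {q | f q + g q ≤ 0})
    (hA : ∀ i, ∃ q ∈ {q | f q + g q < 0}, ∀ k, k ≠ i → A k q + a k < A i q + a i)
    (hB : ∀ i, ∃ q ∈ {q | f q + g q < 0}, ∀ k, k ≠ i → B k q + b k < B i q + b i) :
    ∃ q, f q + g q < 0 ∧ Crease A a f q ∧ Crease B b g q ∧
      ∀ w, f w + g w = 0 → (∀ i, A i q + a i = f q → A i w + a i = f w) →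
        (∀ i, B i q + b i = g q → B i w + b i = g w) → False := by
  obtain ⟨q0, hq0, hq1, hq2⟩ := exists_common_crease hV hf hg hb hA hB
  have hfc := hf.cont
  have hgc := hg.cont
  have hcomp : IsCompact ({q | f q + g q ≤ 0} ∩ ({q | Crease A a f q} ∩ {q | Crease B b g q})) := by
    refine Metric.isCompact_of_isClosed_isBounded
      ((isClosed_le (by fun_prop) (by fun_prop)).inter
        ((Crease.closed hf).inter (Crease.closed hg))) (hb.subset inter_subset_left)
  obtain ⟨q, ⟨-, hqc, hqc'⟩, hqmin⟩ := hcomp.exists_isMinOn ⟨q0, hq0.le, hq1, hq2⟩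
    (f := fun y => f y + g y) (by fun_prop)
  have hqneg : f q + g q < 0 := (hqmin (a := q0) ⟨hq0.le, hq1, hq2⟩).trans_lt hq0
  refine ⟨q, hqneg, hqc, hqc', fun w hw hwA hwB => ?_⟩
  have hev := (active_stable hf hwA).and (active_stable hg hwB)
  obtain ⟨t, ⟨h1, h2⟩, ht⟩ :=
    ((hev.filter_mono nhdsWithin_le_nhds).and (self_mem_nhdsWithin (s := Ioi (0:ℝ)))).exists
  have ht : 0 < t := ht
  obtain ⟨i, i', hii, hi, hi'⟩ := hqc
  obtain ⟨j, j', hjj, hj, hj'⟩ := hqc'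
  have e1 := h1 i hi
  have e2 := h2 j hj
  have e3 := hwA i hi
  have e4 := hwB j hj
  have hval : f (q + t • (q - w)) + g (q + t • (q - w)) = (1 + t) * (f q + g q) := by
    rw [← e1, ← e2]
    simp only [map_add, map_smul, map_sub, smul_eq_mul]
    have : t * (A i w + a i + (B j w + b j)) = 0 := by rw [e3, e4, hw, mul_zero]
    rw [← hi, ← hj]
    linarith
  have hlt : (1 + t) * (f q + g q) < f q + g q := by nlinarith
  have := hqmin (a := q + t • (q - w)) ⟨by show f (q + t • (q - w)) + g (q + t • (q - w)) ≤ 0; linarith,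
    ⟨i, i', hii, e1, h1 i' hi'⟩, ⟨j, j', hjj, e2, h2 j' hj'⟩⟩
  have this : f q + g q ≤ f (q + t • (q - w)) + g (q + t • (q - w)) := this
  linarith

end Env

/-! ### Facet description of a polytope -/

section Poly

open Set Filter Topology MeasureTheory

/-- The half-space description of `P` by its facets. -/
structure HRep {ι : Type*} (P : Set E) (l : ι → E →L[ℝ] ℝ) (b : ι → ℝ) (Fa : ι → Set E) :
    Prop where
  mem : ∀ y, y ∈ P ↔ ∀ i, l i y ≤ b i
  fac : ∀ i, IsFacet P (Fa i)
  ne : ∀ i, (Fa i).Nonempty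
  surj : ∀ F, IsFacet P F → ∃ i, Fa i = F
  inj : Function.Injective Fa
  face : ∀ i y, y ∈ Fa i ↔ y ∈ P ∧ l i y = b i
  aff : ∀ i y, y ∈ affineSpan ℝ (Fa i) ↔ l i y = b i
  int : ∀ y, y ∈ interior P ↔ ∀ i, l i y < b i

lemma exposed_eq_hull (s : Finset E) {F : Set E}
    (hF : IsExposed ℝ (convexHull ℝ (s : Set E)) F) :
    F = convexHull ℝ (F ∩ s) := by
  have hPc : IsCompact (convexHull ℝ (s : Set E)) := s.finite_toSet.isCompact_convexHull ℝ
  have hFc : IsCompact F := hF.isCompact hPc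
  have hFconv : Convex ℝ F := hF.convex (convex_convexHull ℝ _)
  apply Subset.antisymm
  · have h1 := closure_convexHull_extremePoints hFc hFconv
    have h2 : F.extremePoints ℝ ⊆ F ∩ s := fun y hy =>
      ⟨hy.1, extremePoints_convexHull_subset (hF.isExtreme.extremePoints_subset_extremePoints hy)⟩
    have hcl : IsClosed (convexHull ℝ (F ∩ s)) :=
      ((s.finite_toSet.subset inter_subset_right).isCompact_convexHull ℝ).isClosed
    calc F = closure (convexHull ℝ (F.extremePoints ℝ)) := h1.symm
      _ ⊆ closure (convexHull ℝ (F ∩ s)) := closure_mono (convexHull_mono h2)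
      _ = _ := hcl.closure_eq
  · exact convexHull_min inter_subset_left hFconv

lemma facets_finite (s : Finset E) :
    Finite {F : Set E // IsFacet (convexHull ℝ (s : Set E)) F} := by
  have hfin : Finite {T : Set E // T ⊆ s} := s.finite_toSet.finite_subsets
  refine Finite.of_injective (fun F => (⟨F.1 ∩ s, inter_subset_right⟩ : {T : Set E // T ⊆ s})) ?_
  intro F G h
  simp only [Subtype.mk.injEq] at h
  apply Subtype.ext
  rw [exposed_eq_hull s F.2.1, exposed_eq_hull s G.2.1, h]

lemma lt_of_mem_interior {P : Set E} {l : E →L[ℝ] ℝ} {b : ℝ} (hl : l ≠ 0)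
    (hle : ∀ y ∈ P, l y ≤ b) {y : E} (hy : y ∈ interior P) : l y < b := by
  obtain ⟨v, hv⟩ : ∃ v, 0 < l v := by
    by_contra! hcon
    apply hl
    ext v
    have h1 := hcon v
    have h2 := hcon (-v)
    simp only [map_neg] at h2
    simp; linarith
  have hc : Tendsto (fun t : ℝ => y + t • v) (𝓝 0) (𝓝 y) := by
    have : Continuous (fun t : ℝ => y + t • v) := by fun_prop
    simpa using this.tendsto 0
  have hev := hc.eventually (mem_interior_iff_mem_nhds.1 hy)
  obtain ⟨t, h1, ht⟩ :=
    ((hev.filter_mono nhdsWithin_le_nhds).and (self_mem_nhdsWithin (s := Ioi (0:ℝ)))).exists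
  have ht : 0 < t := ht
  have := hle _ h1
  simp only [map_add, map_smul, smul_eq_mul] at this
  nlinarith

lemma span_le_ker {F : Set E} {l : E →L[ℝ] ℝ} {b : ℝ} (hF : ∀ y ∈ F, l y = b) :
    (affineSpan ℝ F).direction ≤ LinearMap.ker (l : E →ₗ[ℝ] ℝ) := by
  rw [direction_affineSpan, vectorSpan_def, Submodule.span_le]
  rintro _ ⟨x, hx, y, hy, rfl⟩
  simp [hF x hx, hF y hy]

variable [FiniteDimensional ℝ E]

lemma facet_rep (hE : 2 ≤ Module.finrank ℝ E) {P F : Set E} (hdim : affineSpan ℝ P = ⊤)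
    (hF : IsFacet P F) :
    ∃ (l : E →L[ℝ] ℝ) (b : ℝ), (∀ y ∈ P, l y ≤ b) ∧ (∀ y, y ∈ F ↔ y ∈ P ∧ l y = b) ∧
      (∀ y, y ∈ affineSpan ℝ F ↔ l y = b) ∧ (∀ y ∈ interior P, l y < b) ∧ F.Nonempty := by
  obtain ⟨hexp, hrank⟩ := hF
  have hne : F.Nonempty := by
    rw [nonempty_iff_ne_empty]
    rintro rfl
    rw [AffineSubspace.span_empty, AffineSubspace.direction_bot, finrank_bot] at hrank
    omega
  obtain ⟨l, hl⟩ := hexp hne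
  obtain ⟨y0, hy0⟩ := hne
  have hy0' := hy0
  rw [hl] at hy0'
  have hle : ∀ y ∈ P, l y ≤ l y0 := hy0'.2
  have hFiff : ∀ y, y ∈ F ↔ y ∈ P ∧ l y = l y0 := by
    intro y
    constructor
    · intro hy
      rw [hl] at hy
      exact ⟨hy.1, le_antisymm (hle y hy.1) (hy.2 y0 hy0'.1)⟩
    · rintro ⟨hy, he⟩
      rw [hl]
      exact ⟨hy, fun z hz => he ▸ hle z hz⟩
  have hl0 : l ≠ 0 := by
    rintro rfl
    have : F = P := by
      ext y; rw [hFiff]; simp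
    rw [this, hdim, AffineSubspace.direction_top, finrank_top] at hrank
    omega
  have hl0' : (l : E →ₗ[ℝ] ℝ) ≠ 0 := fun h => hl0 (by ext v; exact LinearMap.congr_fun h v)
  have hker := Module.Dual.finrank_ker_add_one_of_ne_zero hl0'
  have hdir : (affineSpan ℝ F).direction = LinearMap.ker (l : E →ₗ[ℝ] ℝ) :=
    Submodule.eq_of_le_of_finrank_eq (span_le_ker fun y hy => ((hFiff y).1 hy).2) (by omega)
  refine ⟨l, l y0, hle, hFiff, fun y => ?_, fun y hy => lt_of_mem_interior hl0 hle hy, ⟨y0, hy0⟩⟩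
  have hm : y0 ∈ affineSpan ℝ F := subset_affineSpan ℝ F hy0
  rw [← AffineSubspace.vsub_right_mem_direction_iff_mem hm, hdir]
  simp [sub_eq_zero]

/-- A point outside a polytope is cut off by a facet. -/
lemma exists_facet_cut (s : Finset E) {P : Set E} (hP : P = convexHull ℝ (s : Set E))
    (hdim : affineSpan ℝ P = ⊤) {z : E} (hz : z ∉ P) :
    ∃ F, IsFacet P F ∧ ∃ y0 ∈ interior P, ∃ t : ℝ, 0 < t ∧ t < 1 ∧ y0 + t • (z - y0) ∈ F := by
  classical
  have hPconv : Convex ℝ P := hP ▸ convex_convexHull ℝ _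
  have hPc : IsCompact P := hP ▸ s.finite_toSet.isCompact_convexHull ℝ
  have hInt : (interior P).Nonempty := hPconv.interior_nonempty_iff_affineSpan_eq_top.2 hdim
  -- generic interior point
  obtain ⟨y0, hy0, hgen⟩ : ∃ y0 ∈ interior P, ∀ T ∈ s.powerset,
      Module.finrank ℝ (affineSpan ℝ (T : Set E)).direction + 1 < Module.finrank ℝ E →
      y0 ∉ affineSpan ℝ (insert z (affineSpan ℝ (T : Set E) : Set E)) := by
    by_contra! hcon
    borelize E
    set μ : Measure E := (Module.finBasis ℝ E).addHaar
    have hpos : 0 < μ (interior P) := isOpen_interior.measure_pos μ hInt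
    have hsub : interior P ⊆ ⋃ T ∈ s.powerset.filter fun T : Finset E =>
        Module.finrank ℝ (affineSpan ℝ (T : Set E)).direction + 1 < Module.finrank ℝ E,
        (affineSpan ℝ (insert z (affineSpan ℝ (T : Set E) : Set E)) : Set E) := by
      intro y hy
      obtain ⟨T, hT, hr, hm⟩ := hcon y hy
      exact mem_iUnion₂.2 ⟨T, Finset.mem_filter.2 ⟨hT, hr⟩, hm⟩
    have hnull : μ (interior P) = 0 := by
      refine measure_mono_null hsub ?_
      refine (measure_biUnion_null_iff (Finset.countable_toSet _)).2 ?_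
      intro T hT
      have hT := (Finset.mem_filter.1 hT).2
      apply Measure.addHaar_affineSubspace
      intro htop
      have h1 := finrank_vectorSpan_insert_le (affineSpan ℝ (T : Set E)) z
      rw [← direction_affineSpan, htop, AffineSubspace.direction_top, finrank_top] at h1
      omega
    exact hpos.ne' hnull
  -- exit point
  have hcont : Continuous (fun t : ℝ => y0 + t • (z - y0)) := by fun_prop
  have hK : IsCompact (Icc (0:ℝ) 1 ∩ (fun t : ℝ => y0 + t • (z - y0)) ⁻¹' P) :=
    isCompact_Icc.inter_right (hPc.isClosed.preimage hcont)
  obtain ⟨t0, ⟨⟨ht00, ht01⟩, htP⟩, htmax⟩ := hK.exists_isGreatest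
    ⟨0, ⟨le_rfl, zero_le_one⟩, by simpa using interior_subset hy0⟩
  have htP : y0 + t0 • (z - y0) ∈ P := htP
  have ht1 : t0 < 1 := by
    refine lt_of_le_of_ne ht01 ?_
    rintro rfl
    apply hz
    simpa using htP
  set p := y0 + t0 • (z - y0) with hp
  have hpint : p ∉ interior P := by
    intro hpi
    have hev := (hcont.tendsto t0).eventually (mem_interior_iff_mem_nhds.1 hpi)
    have h1 : ∀ᶠ t : ℝ in 𝓝[>] t0, t < 1 := nhdsWithin_le_nhds (gt_mem_nhds ht1)
    obtain ⟨t, ⟨h2, h3⟩, h4⟩ :=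
      (((hev.filter_mono nhdsWithin_le_nhds).and h1).and
        (self_mem_nhdsWithin (s := Ioi t0))).exists
    have h4 : t0 < t := h4
    have := htmax ⟨⟨by linarith, h3.le⟩, h2⟩
    linarith
  obtain ⟨l, hl⟩ := geometric_hahn_banach_open_point hPconv.interior isOpen_interior hpint
  have hle : ∀ y ∈ P, l y ≤ l p := by
    have hcl : closure (interior P) = closure P :=
      hPconv.closure_interior_eq_closure_of_nonempty_interior hInt
    have : closure (interior P) ⊆ {y | l y ≤ l p} :=
      closure_minimal (fun y hy => (hl y hy).le) (isClosed_le (by fun_prop) (by fun_prop))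
    intro y hy
    exact this (hcl ▸ subset_closure hy)
  have hl0 : l ≠ 0 := by
    rintro rfl
    have := hl y0 hy0
    simp at this
  have hl0' : (l : E →ₗ[ℝ] ℝ) ≠ 0 := fun h => hl0 (by ext v; exact LinearMap.congr_fun h v)
  have hker := Module.Dual.finrank_ker_add_one_of_ne_zero hl0'
  set F : Set E := {y ∈ P | ∀ z ∈ P, l z ≤ l y} with hF
  have hpF : p ∈ F := ⟨htP, hle⟩
  have hexp : IsExposed ℝ P F := fun _ => ⟨l, rfl⟩
  have hFl : ∀ y ∈ F, l y = l p := fun y hy => le_antisymm (hle y hy.1) (hy.2 p htP)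
  have ht0 : 0 < t0 := by
    refine lt_of_le_of_ne ht00 ?_
    rintro rfl
    apply hpint
    simpa [hp] using hy0
  refine ⟨F, ⟨hexp, ?_⟩, y0, hy0, t0, ht0, ht1, hpF⟩
  have hup := Submodule.finrank_mono (span_le_ker hFl)
  by_contra hne
  have hT : ((s.filter (· ∈ F) : Finset E) : Set E) = F ∩ s := by
    ext y; simp [and_comm]
  have hFT : F = convexHull ℝ ((s.filter (· ∈ F) : Finset E) : Set E) := by
    rw [hT]; subst hP; exact exposed_eq_hull s hexp
  have hspan : affineSpan ℝ F = affineSpan ℝ ((s.filter (· ∈ F) : Finset E) : Set E) := by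
    conv_lhs => rw [hFT]
    exact affineSpan_convexHull _
  refine hgen (s.filter (· ∈ F)) (by simp) (by rw [← hspan]; omega) ?_
  rw [← hspan]
  set S := affineSpan ℝ (insert z (affineSpan ℝ F : Set E)) with hS
  have hzS : z ∈ S := subset_affineSpan ℝ _ (mem_insert _ _)
  have hpS : p ∈ S := subset_affineSpan ℝ _ (mem_insert_of_mem _ (subset_affineSpan ℝ _ hpF))
  have := AffineMap.lineMap_mem (1 / (1 - t0)) hzS hpS
  convert this using 1
  rw [AffineMap.lineMap_apply, hp]
  have h10 : 1 - t0 ≠ 0 := by linarith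
  simp only [vsub_eq_sub, vadd_eq_add]
  have : y0 + t0 • (z - y0) - z = (1 - t0) • (y0 - z) := by module
  rw [this, smul_smul, one_div, inv_mul_cancel₀ h10, one_smul]
  abel

lemma exists_hrep (hE : 2 ≤ Module.finrank ℝ E) (s : Finset E) {P : Set E}
    (hP : P = convexHull ℝ (s : Set E)) (hdim : affineSpan ℝ P = ⊤) :
    ∃ (l : {F : Set E // IsFacet P F} → E →L[ℝ] ℝ) (b : {F : Set E // IsFacet P F} → ℝ),
      HRep P l b Subtype.val := by
  have hfin : Finite {F : Set E // IsFacet P F} := by subst hP; exact facets_finite s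
  choose l b h1 h2 h3 h4 h5 using fun F : {F : Set E // IsFacet P F} => facet_rep hE hdim F.2
  have hmem : ∀ y, y ∈ P ↔ ∀ i, l i y ≤ b i := by
    intro y
    refine ⟨fun hy i => h1 i y hy, fun hy => ?_⟩
    by_contra hyP
    obtain ⟨F, hF, y0, hy0, t, ht0, ht1, hp⟩ := exists_facet_cut s hP hdim hyP
    have e1 := h4 ⟨F, hF⟩ y0 hy0
    have e2 := ((h2 ⟨F, hF⟩ _).1 hp).2
    have e3 := hy ⟨F, hF⟩
    simp only [map_add, map_smul, map_sub, smul_eq_mul] at e2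
    nlinarith
  refine ⟨l, b, hmem, fun i => i.2, h5, fun F hF => ⟨⟨F, hF⟩, rfl⟩, Subtype.val_injective, h2, h3, ?_⟩
  intro y
  refine ⟨fun hy i => h4 i y hy, fun hy => ?_⟩
  rw [mem_interior_iff_mem_nhds]
  have : ∀ᶠ z in 𝓝 y, ∀ i, l i z < b i := by
    rw [eventually_all]
    intro i
    exact ((l i).continuous.tendsto y).eventually (gt_mem_nhds (hy i))
  filter_upwards [this] with z hz
  exact (hmem z).2 fun i => (hz i).le

end Poly

section HRepLemmas

variable [FiniteDimensional ℝ E]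

open Set Filter Topology

variable {ι : Type*} {P : Set E} {l : ι → E →L[ℝ] ℝ} {b : ι → ℝ} {Fa : ι → Set E}

lemma HRep.relint [Finite ι] (h : HRep P l b Fa) (i : ι) (y : E) :
    y ∈ intrinsicInterior ℝ (Fa i) ↔ l i y = b i ∧ ∀ k, k ≠ i → l k y < b k := by
  rw [mem_intrinsicInterior]
  constructor
  · rintro ⟨y', hy', rfl⟩
    have hyF : (y' : E) ∈ Fa i := mem_preimage.1 (interior_subset hy')
    obtain ⟨hyP, hyi⟩ := (h.face i y').1 hyF
    refine ⟨hyi, fun k hki => lt_of_le_of_ne ((h.mem _).1 hyP k) fun hk => ?_⟩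
    -- the facet `i` is not contained in the facet `k`
    obtain ⟨w, hwF, hwk⟩ : ∃ w ∈ Fa i, l k w < b k := by
      by_contra! hcon
      have hsub : Fa i ⊆ Fa k := fun w hw =>
        (h.face k w).2 ⟨((h.face i w).1 hw).1,
          le_antisymm ((h.mem _).1 ((h.face i w).1 hw).1 k) (hcon w hw)⟩
      have hle : affineSpan ℝ (Fa i) ≤ affineSpan ℝ (Fa k) := affineSpan_mono ℝ hsub
      have heq : affineSpan ℝ (Fa i) = affineSpan ℝ (Fa k) := by
        refine AffineSubspace.eq_of_direction_eq_of_nonempty_of_le ?_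
          ⟨y', subset_affineSpan ℝ _ hyF⟩ hle
        exact Submodule.eq_of_le_of_finrank_eq (AffineSubspace.direction_le hle)
          (by have := (h.fac i).2; have := (h.fac k).2; omega)
      apply hki
      apply h.inj
      ext w
      rw [h.face, h.face, ← h.aff, ← h.aff, heq]
    have hwi := ((h.face i w).1 hwF).2
    have hline : ∀ t : ℝ, (y' : E) + t • ((y' : E) - w) ∈ affineSpan ℝ (Fa i) := by
      intro t
      rw [h.aff]
      simp [hyi, hwi]
    have hcont : Continuous (fun t : ℝ =>
        (⟨(y' : E) + t • ((y' : E) - w), hline t⟩ : affineSpan ℝ (Fa i))) := by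
      apply Continuous.subtype_mk; fun_prop
    have htend := hcont.tendsto 0
    have h0 : (⟨(y' : E) + (0:ℝ) • ((y' : E) - w), hline 0⟩ : affineSpan ℝ (Fa i)) = y' := by
      apply Subtype.ext; simp
    rw [h0] at htend
    have hev := htend.eventually (mem_interior_iff_mem_nhds.1 hy')
    obtain ⟨t, h1, ht⟩ :=
      ((hev.filter_mono nhdsWithin_le_nhds).and (self_mem_nhdsWithin (s := Ioi (0:ℝ)))).exists
    have ht : 0 < t := ht
    have h1 : (y' : E) + t • ((y' : E) - w) ∈ Fa i := h1
    have h2 := (h.mem _).1 ((h.face i _).1 h1).1 k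
    simp only [map_add, map_smul, map_sub, smul_eq_mul] at h2
    nlinarith
  · rintro ⟨hyi, hk⟩
    refine ⟨⟨y, (h.aff i y).2 hyi⟩, ?_, rfl⟩
    rw [mem_interior_iff_mem_nhds]
    have : ∀ᶠ z : affineSpan ℝ (Fa i) in 𝓝 ⟨y, (h.aff i y).2 hyi⟩, ∀ k, k ≠ i → l k z < b k := by
      rw [eventually_all]
      intro k
      by_cases hki : k = i
      · simp [hki]
      · have hc : Continuous (fun z : affineSpan ℝ (Fa i) => l k z) := by fun_prop
        filter_upwards [(hc.tendsto ⟨y, (h.aff i y).2 hyi⟩).eventually (gt_mem_nhds (hk k hki))]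
          with z hz _ using hz
    filter_upwards [this] with z hz
    have hzi := (h.aff i z).1 z.2
    refine (h.face i z).2 ⟨(h.mem _).2 fun k => ?_, hzi⟩
    by_cases hki : k = i
    · rw [hki, hzi]
    · exact (hz k hki).le

lemma HRep.same (h : HRep P l b Fa) (i : ι) {x y : E} (hx : l i x < b i) (hy : l i y < b i) :
    (affineSpan ℝ (Fa i)).SSameSide x y := by
  obtain ⟨p0, hp0⟩ := h.ne i
  have hp0 := ((h.face i p0).1 hp0).2
  refine ⟨⟨x - ((b i - l i x) / (b i - l i y)) • (y - p0), ?_, p0, (h.aff i _).2 hp0, ?_⟩,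
    fun hm => hx.ne ((h.aff i x).1 hm), fun hm => hy.ne ((h.aff i y).1 hm)⟩
  · rw [h.aff]
    simp only [map_sub, map_smul, smul_eq_mul, hp0]
    have : b i - l i y ≠ 0 := by linarith
    field_simp
    ring
  · have hc : 0 ≤ (b i - l i x) / (b i - l i y) := div_nonneg (by linarith) (by linarith)
    have h0 : SameRay ℝ (((b i - l i x) / (b i - l i y)) • (y - p0)) (y - p0) :=
      SameRay.sameRay_nonneg_smul_left _ hc
    simpa using h0

lemma HRep.opp (h : HRep P l b Fa) (i : ι) {x y : E} (hx : b i < l i x) (hy : l i y < b i) :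
    (affineSpan ℝ (Fa i)).SOppSide x y := by
  obtain ⟨p0, hp0⟩ := h.ne i
  have hp0 := ((h.face i p0).1 hp0).2
  refine ⟨⟨x - ((l i x - b i) / (b i - l i y)) • (p0 - y), ?_, p0, (h.aff i _).2 hp0, ?_⟩,
    fun hm => hx.ne' ((h.aff i x).1 hm), fun hm => hy.ne ((h.aff i y).1 hm)⟩
  · rw [h.aff]
    simp only [map_sub, map_smul, smul_eq_mul, hp0]
    have : b i - l i y ≠ 0 := by linarith
    field_simp
    ring
  · have hc : 0 ≤ (l i x - b i) / (b i - l i y) := div_nonneg (by linarith) (by linarith)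
    have h0 : SameRay ℝ (((l i x - b i) / (b i - l i y)) • (p0 - y)) (p0 - y) :=
      SameRay.sameRay_nonneg_smul_left _ hc
    simpa using h0

lemma HRep.beneath_iff (h : HRep P l b Fa) (hInt : (interior P).Nonempty) (i : ι) (x : E) :
    Beneath P (Fa i) x ↔ l i x < b i := by
  constructor
  · intro hB
    obtain ⟨y, hy⟩ := hInt
    have hs := hB y hy
    have hy' := (h.int y).1 hy i
    rcases lt_trichotomy (l i x) (b i) with hlt | heq | hgt
    · exact hlt
    · exact absurd ((h.aff i x).2 heq) hs.2.1
    · exact absurd (h.opp i hgt hy') hs.not_sOppSide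
  · intro hx y hy
    exact h.same i hx ((h.int y).1 hy i)

lemma HRep.beyond_iff (h : HRep P l b Fa) (hInt : (interior P).Nonempty) (i : ι) (x : E) :
    Beyond P (Fa i) x ↔ b i < l i x := by
  constructor
  · intro hB
    obtain ⟨y, hy⟩ := hInt
    have hs := hB y hy
    have hy' := (h.int y).1 hy i
    rcases lt_trichotomy (l i x) (b i) with hlt | heq | hgt
    · exact absurd hs (h.same i hlt hy').not_sOppSide
    · exact absurd ((h.aff i x).2 heq) hs.2.1
    · exact hgt
  · intro hx y hy
    exact h.opp i hx ((h.int y).1 hy i)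

/-- Intersections of facets are exposed. -/
lemma HRep.exposed [Finite ι] (h : HRep P l b Fa) (S : Set ι) :
    IsExposed ℝ P {y | y ∈ P ∧ ∀ i ∈ S, l i y = b i} := by
  classical
  rintro ⟨y0, hy0P, hy0⟩
  have := Fintype.ofFinite ι
  refine ⟨∑ i ∈ Finset.univ.filter (· ∈ S), l i, ?_⟩
  ext y
  simp only [mem_ofPred_eq, sum_apply]
  refine and_congr_right fun hy => ?_
  have hle : ∀ z ∈ P, ∀ i ∈ Finset.univ.filter (· ∈ S), l i z ≤ b i :=
    fun z hz i _ => (h.mem z).1 hz i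
  constructor
  · intro hyS z hz
    refine Finset.sum_le_sum fun i hi => ?_
    rw [hyS i (Finset.mem_filter.1 hi).2]
    exact hle z hz i hi
  · intro hyS
    have h1 := hyS y0 hy0P
    have h2 : ∑ i ∈ Finset.univ.filter (· ∈ S), l i y0 = ∑ i ∈ Finset.univ.filter (· ∈ S), b i :=
      Finset.sum_congr rfl fun i hi => hy0 i (Finset.mem_filter.1 hi).2
    have h3 := (Finset.sum_eq_sum_iff_of_le (hle y hy)).1
      (le_antisymm (Finset.sum_le_sum (hle y hy)) (h2 ▸ h1))
    exact fun i hi => h3 i (Finset.mem_filter.2 ⟨Finset.mem_univ _, hi⟩)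

end HRepLemmas

section Easy

open Set Filter Topology

variable [FiniteDimensional ℝ E]

variable {ι : Type*} {P : Set E} {l : ι → E →L[ℝ] ℝ} {b : ι → ℝ} {Fa : ι → Set E}

/-- Condition (i) of the theorem. -/
def CondI (P : Set E) (x : E) : Prop :=
  ∀ (F G : Set E) (u v : E),
        IsExposed ℝ P F → IsExposed ℝ P G → F ∩ G = ∅ →
        u ∈ F → v ∈ G → Collinear ℝ {x, u, v} →
        ((∃ H, IsFacet P H ∧ u ∈ intrinsicInterior ℝ H) ∨
          (∃ H, IsFacet P H ∧ v ∈ intrinsicInterior ℝ H))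

lemma exists_active (h : HRep P l b Fa) {F : Set E} {u v : E} (hF : IsExposed ℝ P F)
    (hu : u ∈ F) (hvP : v ∈ P) (hv : v ∉ F) : ∃ i, l i u = b i := by
  by_contra! hcon
  obtain ⟨m, hm⟩ := hF ⟨u, hu⟩
  have huP : u ∈ P ∧ ∀ y ∈ P, m y ≤ m u := by rw [hm] at hu; exact hu
  have hInt : u ∈ interior P :=
    (h.int u).2 fun i => lt_of_le_of_ne ((h.mem u).1 huP.1 i) (hcon i)
  by_cases hm0 : m = 0
  · apply hv
    rw [hm]
    refine ⟨hvP, fun y _ => ?_⟩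
    simp [hm0]
  · exact absurd (lt_of_mem_interior hm0 huP.2 hInt) (lt_irrefl _)

/-- The easy direction when `u` lies between `x` and `v`. -/
lemma easy_order [Finite ι] (h : HRep P l b Fa) {x u v : E} (r : ℝ) (hr : 0 < r) (hr1 : r < 1)
    (huv : u = x + r • (v - x)) (hu : u ∈ P) (hv : v ∈ P)
    (hua : ∃ i, l i u = b i) (hva : ∃ i, l i v = b i)
    (hx : (∃ i₀, ∀ i, i ≠ i₀ → b i < l i x) ∨ (∃ i₀, ∀ i, i ≠ i₀ → l i x < b i)) :
    (∃ i, u ∈ intrinsicInterior ℝ (Fa i)) ∨ (∃ i, v ∈ intrinsicInterior ℝ (Fa i)) := by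
  have hlu : ∀ i, l i u = l i x + r * (l i v - l i x) := by intro i; simp [huv]
  rcases hx with ⟨i₀, hi⟩ | ⟨i₀, hi⟩
  · right
    have hlt : ∀ k, k ≠ i₀ → l k v < b k := by
      intro k hk
      have h1 := hi k hk
      have h2 := (h.mem u).1 hu k
      rw [hlu] at h2
      by_contra! hcon
      nlinarith
    obtain ⟨j, hj⟩ := hva
    have : j = i₀ := by
      by_contra hne
      exact (hlt j hne).ne hj
    subst this
    exact ⟨j, (h.relint j v).2 ⟨hj, hlt⟩⟩
  · left
    have hlt : ∀ k, k ≠ i₀ → l k u < b k := by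
      intro k hk
      have h1 := hi k hk
      have h2 := (h.mem v).1 hv k
      rw [hlu]
      nlinarith
    obtain ⟨j, hj⟩ := hua
    have : j = i₀ := by
      by_contra hne
      exact (hlt j hne).ne hj
    subst this
    exact ⟨j, (h.relint j u).2 ⟨hj, hlt⟩⟩

lemma easy_dir [Finite ι] (h : HRep P l b Fa) {x : E} (hxP : x ∉ P) (hconv : Convex ℝ P)
    (hx : (∃ i₀, ∀ i, i ≠ i₀ → b i < l i x) ∨ (∃ i₀, ∀ i, i ≠ i₀ → l i x < b i)) :
    CondI P x := by
  intro F G u v hF hG hFG hu hv hcol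
  have huP := hF.subset hu
  have hvP := hG.subset hv
  have huG : u ∉ G := fun hh => (Set.mem_empty_iff_false u).1 (hFG ▸ ⟨hu, hh⟩)
  have hvF : v ∉ F := fun hh => (Set.mem_empty_iff_false v).1 (hFG ▸ ⟨hh, hv⟩)
  have hua := exists_active h hF hu hvP hvF
  have hva := exists_active h hG hv huP huG
  have hne : x ≠ u := fun hh => hxP (hh ▸ huP)
  have hne' : x ≠ v := fun hh => hxP (hh ▸ hvP)
  have key : (∃ i, u ∈ intrinsicInterior ℝ (Fa i)) ∨ (∃ i, v ∈ intrinsicInterior ℝ (Fa i)) := by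
    rcases hcol.wbtw_or_wbtw_or_wbtw with hw | hw | hw
    · obtain ⟨r, ⟨hr0, hr1⟩, hr⟩ := hw
      rw [AffineMap.lineMap_apply_module'] at hr
      refine easy_order h r (lt_of_le_of_ne hr0 ?_) (lt_of_le_of_ne hr1 ?_)
        (by rw [← hr]; abel) huP hvP hua hva hx
      · rintro rfl
        apply hne
        simpa using hr
      · rintro rfl
        apply hvF
        have : v = u := by simpa using hr
        exact this ▸ hu
    · obtain ⟨r, ⟨hr0, hr1⟩, hr⟩ := hw
      rw [AffineMap.lineMap_apply_module'] at hr
      have hr' : v = x + (1 - r) • (u - x) := by rw [← hr]; module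
      refine (easy_order h (1 - r) (sub_pos.2 (lt_of_le_of_ne hr1 ?_))
        (sub_lt_self _ (lt_of_le_of_ne hr0 ?_)) hr' hvP huP hva hua hx).symm
      · rintro rfl
        apply hne'
        simpa using hr
      · rintro rfl
        apply hvF
        have : u = v := by simpa using hr
        exact this ▸ hu
    · exact absurd (hconv.segment_subset hvP huP (mem_segment_iff_wbtw.2 hw)) hxP
  rcases key with ⟨i, hi⟩ | ⟨i, hi⟩
  · exact Or.inl ⟨_, h.fac i, hi⟩
  · exact Or.inr ⟨_, h.fac i, hi⟩

lemma push_mem [Finite ι] (h : HRep P l b Fa) {u w : E} (hu : u ∈ P)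
    (hw : ∀ k, l k u = b k → l k w = b k) :
    ∀ᶠ ε : ℝ in 𝓝[>] 0, u + ε • (u - w) ∈ P := by
  have key : ∀ k, ∀ᶠ ε : ℝ in 𝓝[>] 0, l k (u + ε • (u - w)) ≤ b k := by
    intro k
    rcases ((h.mem u).1 hu k).eq_or_lt with heq | hlt
    · refine Eventually.of_forall fun ε => ?_
      simp [hw k heq, heq]
    · have hc : Continuous fun ε : ℝ => l k (u + ε • (u - w)) := by fun_prop
      have : Tendsto (fun ε : ℝ => l k (u + ε • (u - w))) (𝓝 0) (𝓝 (l k u)) := by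
        simpa using hc.tendsto 0
      exact ((this.eventually_lt_const hlt).filter_mono nhdsWithin_le_nhds).mono fun _ => le_of_lt
  filter_upwards [eventually_all.2 key] with ε hε
  exact (h.mem _).2 hε

/-- The points of `P` lying on every facet through `u`. -/
lemma condI_apply [Finite ι] (h : HRep P l b Fa) {x u v : E} (hI : CondI P x)
    (hu : u ∈ P) (hv : v ∈ P) (hcol : Collinear ℝ {x, u, v})
    (hdisj : ∀ w ∈ P, (∀ k, l k u = b k → l k w = b k) → (∀ k, l k v = b k → l k w = b k) → False) :
    (∃ i, l i u = b i ∧ ∀ k, k ≠ i → l k u < b k) ∨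
    (∃ i, l i v = b i ∧ ∀ k, k ≠ i → l k v < b k) := by
  have := hI _ _ u v (h.exposed {k | l k u = b k}) (h.exposed {k | l k v = b k})
    (by
      rw [Set.eq_empty_iff_forall_notMem]
      rintro w ⟨⟨hw, h1⟩, ⟨_, h2⟩⟩
      exact hdisj w hw h1 h2)
    ⟨hu, fun i hi => hi⟩ ⟨hv, fun i hi => hi⟩ hcol
  rcases this with ⟨H, hH, hm⟩ | ⟨H, hH, hm⟩
  · obtain ⟨i, rfl⟩ := h.surj H hH
    exact Or.inl ⟨i, (h.relint i u).1 hm⟩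
  · obtain ⟨i, rfl⟩ := h.surj H hH
    exact Or.inr ⟨i, (h.relint i v).1 hm⟩

lemma collinear_ray {x u v : E} (r : ℝ) (hu : u = x + r • (v - x)) : Collinear ℝ {x, u, v} := by
  rw [collinear_iff_of_mem (p₀ := x) (by simp)]
  refine ⟨v - x, ?_⟩
  intro p hp
  simp only [mem_insert_iff, mem_singleton_iff] at hp
  rcases hp with rfl | rfl | rfl
  · exact ⟨0, by simp⟩
  · exact ⟨r, by rw [hu]; simp [add_comm]⟩
  · exact ⟨1, by simp⟩

lemma exists_relint (h : HRep P l b Fa) (hconv : Convex ℝ P) [Finite ι] (i : ι) :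
    ∃ p ∈ P, l i p = b i ∧ ∀ k, k ≠ i → l k p < b k := by
  obtain ⟨p, hp⟩ := (h.ne i).intrinsicInterior ((h.fac i).1.convex hconv)
  exact ⟨p, ((h.face i p).1 (intrinsicInterior_subset hp)).1, (h.relint i p).1 hp⟩

lemma not_on_hull [Finite ι] (h : HRep P l b Fa) (hconv : Convex ℝ P) (hcomp : IsCompact P)
    {x : E} (hxP : x ∉ P) (hI : CondI P x) (i : ι) : l i x ≠ b i := by
  intro hxi
  let F : Set E := {y | y ∈ P ∧ l i y = b i}
  have hFcl : IsClosed F := hcomp.isClosed.inter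
    (isClosed_eq (l i).continuous continuous_const)
  have hFc : IsCompact F := hcomp.of_isClosed_subset hFcl (fun y hy => hy.1)
  let K : Set (E × ℝ) := (F ×ˢ Icc (0 : ℝ) 1) ∩ {z | x + z.2 • (z.1 - x) ∈ F}
  have hK : IsCompact K := by
    refine (hFc.prod isCompact_Icc).inter_right ?_
    exact hFcl.preimage (by fun_prop)
  -- a starting point with parameter below one
  obtain ⟨p, hpP, hpi, hp⟩ := exists_relint h hconv i
  have hstart : ∃ z ∈ K, z.2 < 1 := by
    have h1 := push_mem h (w := x) hpP (by
      intro k hk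
      by_cases hki : k = i
      · rw [hki, hxi]
      · exact absurd hk (hp k hki).ne)
    obtain ⟨ε, hε, hε0⟩ := (h1.and self_mem_nhdsWithin).exists
    have hε0 : 0 < ε := hε0
    refine ⟨(p + ε • (p - x), (1 + ε)⁻¹), ⟨⟨⟨hε, by simp [hpi, hxi]⟩, ?_, ?_⟩, ?_⟩, ?_⟩
    · positivity
    · exact inv_le_one_of_one_le₀ (by linarith)
    · have : x + (1 + ε)⁻¹ • (p + ε • (p - x) - x) = p := by
        have e : p + ε • (p - x) - x = (1 + ε) • (p - x) := by module
        rw [e, smul_smul, inv_mul_cancel₀ (by linarith), one_smul]; abel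
      change x + (1 + ε)⁻¹ • (p + ε • (p - x) - x) ∈ F
      rw [this]
      exact ⟨hpP, hpi⟩
    · exact inv_lt_one_of_one_lt₀ (by linarith)
  obtain ⟨z1, hz1, hz1lt⟩ := hstart
  obtain ⟨⟨v, t⟩, hzK, hmin⟩ := hK.exists_isMinOn ⟨z1, hz1⟩ (continuous_snd.continuousOn)
  obtain ⟨⟨hvF, ht0, ht1⟩, huF⟩ := hzK
  have hvF : v ∈ F := hvF
  have ht0 : 0 ≤ t := ht0
  have huF : x + t • (v - x) ∈ F := huF
  have htlt : t < 1 := lt_of_le_of_lt (hmin hz1) hz1lt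
  have htpos : 0 < t := by
    refine lt_of_le_of_ne ht0 ?_
    rintro rfl
    apply hxP
    simpa using huF.1
  set u := x + t • (v - x) with hu
  have hdisj : ∀ w ∈ P, (∀ k, l k u = b k → l k w = b k) →
      (∀ k, l k v = b k → l k w = b k) → False := by
    intro w hw h1 h2
    have hwi := h1 i huF.2
    obtain ⟨ε, ⟨hεu, hεv⟩, hε0⟩ :=
      (((push_mem h huF.1 h1).and (push_mem h hvF.1 h2)).and self_mem_nhdsWithin).exists
    have hε0 : 0 < ε := hε0
    have hc : 0 < ε * (1 - t) := mul_pos hε0 (by linarith)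
    set c := ε * (1 - t) with hcdef
    have hmem : ((v + ε • (v - w), t * (1 + c)⁻¹) : E × ℝ) ∈ K := by
      have hle : (1 + c)⁻¹ ≤ 1 := inv_le_one_of_one_le₀ (by linarith)
      have hpos : 0 < (1 + c)⁻¹ := by positivity
      refine ⟨⟨⟨hεv, by simp [hvF.2, hwi]⟩, by positivity, by nlinarith⟩, ?_⟩
      have e : x + (t * (1 + c)⁻¹) • (v + ε • (v - w) - x) =
          (1 + c)⁻¹ • (u + ε • (u - w)) + ((1 + c)⁻¹ * c) • w := by
        have e1 : (1 + c) • x + t • (v + ε • (v - w) - x) = (u + ε • (u - w)) + c • w := by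
          rw [hu, hcdef]; module
        have e2 : x = (1 + c)⁻¹ • (1 + c) • x := by
          rw [smul_smul, inv_mul_cancel₀ (by linarith), one_smul]
        rw [← smul_smul _ c w, ← smul_add, ← e1, smul_add, ← e2, smul_smul, mul_comm t]
      change x + (t * (1 + c)⁻¹) • (v + ε • (v - w) - x) ∈ F
      rw [e]
      constructor
      · refine hconv hεu hw hpos.le (by positivity) ?_
        field_simp
      · simp only [map_add, map_smul, map_sub, huF.2, hwi, smul_eq_mul]
        field_simp
        ring
    have := hmin hmem
    have h3 : t ≤ t * (1 + c)⁻¹ := this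
    have h4 : (1 + c)⁻¹ < 1 := inv_lt_one_of_one_lt₀ (by linarith)
    nlinarith
  rcases condI_apply h hI huF.1 hvF.1 (collinear_ray t hu) hdisj with ⟨j, hj, hj'⟩ | ⟨j, hj, hj'⟩
  · have hji : i = j := by
      by_contra hne
      exact (hj' i hne).ne huF.2
    subst hji
    refine hdisj v hvF.1 (fun k hk => ?_) (fun k hk => hk)
    by_cases hki : k = i
    · rw [hki]; exact hvF.2
    · exact absurd hk (hj' k hki).ne
  · have hji : i = j := by
      by_contra hne
      exact (hj' i hne).ne hvF.2
    subst hji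
    refine hdisj u huF.1 (fun k hk => hk) (fun k hk => ?_)
    by_cases hki : k = i
    · rw [hki]; exact huF.2
    · exact absurd hk (hj' k hki).ne

end Easy

section Hard

open Set Filter Topology

lemma exists_env {V : Type*} [NormedAddCommGroup V] [NormedSpace ℝ V] {ι : Type*} [Finite ι]
    [Nonempty ι] (A : ι → V →L[ℝ] ℝ) (a : ι → ℝ) : ∃ f, IsEnv A a f := by
  have := Fintype.ofFinite ι
  refine ⟨fun q => Finset.univ.sup' Finset.univ_nonempty fun i => A i q + a i, ?_, ?_, ?_⟩
  · exact Continuous.finset_sup'_apply _ fun i _ => by fun_prop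
  · intro i q
    exact Finset.le_sup' (fun i => A i q + a i) (Finset.mem_univ i)
  · intro q
    obtain ⟨i, _, hi⟩ := Finset.exists_mem_eq_sup' Finset.univ_nonempty fun i => A i q + a i
    exact ⟨i, hi.symm⟩

lemma arith_le {c N t : ℝ} (hc : 0 < c) : c⁻¹ * N ≤ t ↔ N ≤ t * c := by
  rw [inv_mul_le_iff₀ hc, mul_comm]

lemma arith_eq {c N t : ℝ} (hc : c ≠ 0) : c⁻¹ * N = t ↔ N = t * c := by
  rw [inv_mul_eq_iff_eq_mul₀ hc, mul_comm]

lemma arith_le_neg {c N t : ℝ} (hc : c < 0) : -c⁻¹ * N ≤ -t ↔ N ≤ t * c := by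
  have : -c⁻¹ * N = (-c)⁻¹ * N := by rw [inv_neg]
  rw [this, arith_le (by linarith)]
  simp

lemma arith_eq_neg {c N t : ℝ} (hc : c ≠ 0) : -c⁻¹ * N = -t ↔ N = t * c := by
  rw [neg_mul, neg_inj, arith_eq hc]

variable [FiniteDimensional ℝ E]

variable {ι : Type*} {P : Set E} {l : ι → E →L[ℝ] ℝ} {b : ι → ℝ} {Fa : ι → Set E}

lemma hard_case [Finite ι] (hd : 3 ≤ Module.finrank ℝ E) (h : HRep P l b Fa)
    (hconv : Convex ℝ P) (hcomp : IsCompact P) (hInt : (interior P).Nonempty)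
    {x : E} (hxP : x ∉ P) (hne : ∀ i, l i x ≠ b i) [Nontrivial {i // l i x < b i}]
    [Nontrivial {i // b i < l i x}] (hI : CondI P x) : False := by
  obtain ⟨y0, hy0⟩ := hInt
  have hy0P := interior_subset hy0
  obtain ⟨φ, m, hφx, hφP⟩ := geometric_hahn_banach_point_closed hconv hcomp.isClosed hxP
  have hφ : ∀ y ∈ P, 0 < φ (y - x) := fun y hy => by
    rw [map_sub]; linarith [hφP y hy]
  have hφ0 : φ.toLinearMap ≠ 0 := by
    intro h0
    have h1 := hφ y0 hy0P
    have h2 : φ (y0 - x) = φ.toLinearMap (y0 - x) := rfl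
    rw [h2, h0] at h1
    simp at h1
  let V := LinearMap.ker φ.toLinearMap
  have hV : 2 ≤ Module.finrank ℝ V := by
    have := Module.Dual.finrank_ker_add_one_of_ne_zero hφ0
    change Module.finrank ℝ V + 1 = _ at this
    omega
  obtain ⟨e, he⟩ : ∃ e, φ e = 1 :=
    ⟨(φ (y0 - x))⁻¹ • (y0 - x), by rw [map_smul, smul_eq_mul, inv_mul_cancel₀ (hφ y0 hy0P).ne']⟩
  have hq0 : ∀ q : V, φ (q : E) = 0 := fun q => q.2
  -- the slack of `x`
  let c : ι → ℝ := fun i => b i - l i x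
  let A : {i // l i x < b i} → V →L[ℝ] ℝ := fun i => (c i)⁻¹ • (l i).comp V.subtypeL
  let a : {i // l i x < b i} → ℝ := fun i => (c i)⁻¹ * l i e
  let B : {i // b i < l i x} → V →L[ℝ] ℝ := fun i => (-(c i)⁻¹) • (l i).comp V.subtypeL
  let b' : {i // b i < l i x} → ℝ := fun i => (-(c i)⁻¹) * l i e
  have hAeq : ∀ i q, A i q + a i = (c i)⁻¹ * l i (e + q) := by
    intro i q
    simp only [A, a, map_add]
    change (c i)⁻¹ * l i q + _ = _
    ring
  have hBeq : ∀ i q, B i q + b' i = -(c i)⁻¹ * l i (e + q) := by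
    intro i q
    simp only [B, b', map_add]
    change -(c i)⁻¹ * l i q + _ = _
    ring
  have hcp : ∀ i : {i // l i x < b i}, 0 < c i := fun i => sub_pos.2 i.2
  have hcn : ∀ i : {i // b i < l i x}, c i < 0 := fun i => sub_neg.2 i.2
  have hAle : ∀ i q t, A i q + a i ≤ t ↔ l i (e + q) ≤ t * c i := fun i q t => by
    rw [hAeq, arith_le (hcp i)]
  have hAe : ∀ i q t, A i q + a i = t ↔ l i (e + q) = t * c i := fun i q t => by
    rw [hAeq, arith_eq (hcp i).ne']
  have hBle : ∀ i q t, B i q + b' i ≤ -t ↔ l i (e + q) ≤ t * c i := fun i q t => by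
    rw [hBeq, arith_le_neg (hcn i)]
  have hBe : ∀ i q t, B i q + b' i = -t ↔ l i (e + q) = t * c i := fun i q t => by
    rw [hBeq, arith_eq_neg (hcn i).ne]
  have hAlt : ∀ i q t, A i q + a i < t ↔ l i (e + q) < t * c i := fun i q t => by
    rw [lt_iff_le_and_ne, lt_iff_le_and_ne, hAle, Ne, hAe]
  have hBlt : ∀ i q t, B i q + b' i < -t ↔ l i (e + q) < t * c i := fun i q t => by
    rw [lt_iff_le_and_ne, lt_iff_le_and_ne, hBle, Ne, hBe]
  -- points of the pencil
  let pt : ℝ → V → E := fun t q => x + t⁻¹ • (e + (q : E))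
  have hpt : ∀ i t (q : V), 0 < t → l i (pt t q) = b i + t⁻¹ * (l i (e + q) - t * c i) := by
    intro i t q ht
    simp only [pt, map_add, map_smul, smul_eq_mul, c]
    field_simp
    ring
  have hple : ∀ i t (q : V), 0 < t → (l i (pt t q) ≤ b i ↔ l i (e + q) ≤ t * c i) := by
    intro i t q ht
    have ht' := inv_pos.2 ht
    rw [hpt i t q ht]
    constructor
    · intro h1
      by_contra! h2
      nlinarith [mul_pos ht' (sub_pos.2 h2)]
    · intro h1
      nlinarith [mul_nonneg ht'.le (sub_nonneg.2 h1)]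
  have hpe : ∀ i t (q : V), 0 < t → (l i (pt t q) = b i ↔ l i (e + q) = t * c i) := by
    intro i t q ht
    have ht' := inv_pos.2 ht
    rw [hpt i t q ht]
    constructor
    · intro h1
      have : t⁻¹ * (l i (e + q) - t * c i) = 0 := by linarith
      rcases mul_eq_zero.1 this with h2 | h2
      · exact absurd h2 ht'.ne'
      · linarith
    · intro h1
      rw [h1]; simp
  have hplt : ∀ i t (q : V), 0 < t → (l i (pt t q) < b i ↔ l i (e + q) < t * c i) := by
    intro i t q ht
    rw [lt_iff_le_and_ne, lt_iff_le_and_ne, hple i t q ht, Ne, hpe i t q ht]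
  -- every point of `P` is in the pencil
  have hcoord : ∀ w ∈ P, ∃ (t : ℝ) (q : V), 0 < t ∧ w = pt t q ∧
      t = (φ (w - x))⁻¹ ∧ (q : E) = (φ (w - x))⁻¹ • (w - x) - e := by
    intro w hw
    have hpos := hφ w hw
    refine ⟨(φ (w - x))⁻¹, ⟨(φ (w - x))⁻¹ • (w - x) - e, ?_⟩, inv_pos.2 hpos, ?_, rfl, rfl⟩
    · change φ _ = 0
      rw [map_sub φ, map_smul, he, smul_eq_mul, inv_mul_cancel₀ hpos.ne', sub_self]
    · simp only [pt]
      rw [add_sub_cancel, inv_inv, smul_smul, mul_inv_cancel₀ hpos.ne', one_smul]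
      abel
  obtain ⟨f, hf⟩ := exists_env A a
  obtain ⟨g, hg⟩ := exists_env B b'
  have hfle : ∀ q t, f q ≤ t ↔ ∀ i : {i // l i x < b i}, l i (e + q) ≤ t * c i := by
    intro q t
    constructor
    · intro h1 i
      exact (hAle i q t).1 ((hf.le i q).trans h1)
    · intro h1
      obtain ⟨i, hi⟩ := hf.ex q
      rw [← hi]
      exact (hAle i q t).2 (h1 i)
  have hgle : ∀ q t, g q ≤ -t ↔ ∀ i : {i // b i < l i x}, l i (e + q) ≤ t * c i := by
    intro q t
    constructor
    · intro h1 i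
      exact (hBle i q t).1 ((hg.le i q).trans h1)
    · intro h1
      obtain ⟨i, hi⟩ := hg.ex q
      rw [← hi]
      exact (hBle i q t).2 (h1 i)
  have hall : ∀ q t, f q ≤ t → g q ≤ -t → ∀ i, l i (e + q) ≤ t * c i := by
    intro q t h1 h2 i
    rcases lt_or_gt_of_ne (hne i) with hi | hi
    · exact (hfle q t).1 h1 ⟨i, hi⟩
    · exact (hgle q t).1 h2 ⟨i, hi⟩
  have hmemP : ∀ q t, 0 < t → (pt t q ∈ P ↔ f q ≤ t ∧ g q ≤ -t) := by
    intro q t ht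
    rw [h.mem]
    constructor
    · intro h1
      exact ⟨(hfle q t).2 fun i => (hple i t q ht).1 (h1 i),
        (hgle q t).2 fun i => (hple i t q ht).1 (h1 i)⟩
    · rintro ⟨h1, h2⟩ i
      exact (hple i t q ht).2 (hall q t h1 h2 i)
  -- positivity of the parameter
  have hfpos : ∀ q, f q + g q ≤ 0 → 0 < f q := by
    intro q hq
    by_contra! ht
    set t := f q with htdef
    have hN := hall q t le_rfl (by linarith)
    set D : E := (e + q) - t • (y0 - x) with hD
    have hray : ∀ r : ℝ, 0 ≤ r → y0 + r • D ∈ P := by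
      intro r hr
      rw [h.mem]
      intro i
      have h1 : l i (y0 + r • D) = b i - ((b i - l i y0) * (1 - r * t)
          + r * (t * c i - l i (e + q))) := by
        simp only [hD, map_add, map_smul, map_sub, smul_eq_mul, c]
        ring
      rw [h1]
      have h2 := (h.mem y0).1 hy0P i
      have h3 : 0 ≤ (b i - l i y0) * (1 - r * t) := by
        apply mul_nonneg (by linarith)
        nlinarith
      have h4 : 0 ≤ r * (t * c i - l i (e + q)) := mul_nonneg hr (by linarith [hN i])
      linarith
    have hφD : 1 ≤ φ D := by
      have h1 : φ D = 1 - t * φ (y0 - x) := by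
        rw [hD, map_sub φ, map_add φ, he, hq0, map_smul, smul_eq_mul, add_zero]
      rw [h1]
      nlinarith [hφ y0 hy0P]
    obtain ⟨M, hM⟩ := (hcomp.image φ.continuous).bddAbove
    have h1 := hM (mem_image_of_mem φ hy0P)
    have h2 := hM (mem_image_of_mem φ (hray (M - φ y0 + 1) (by linarith)))
    rw [map_add, map_smul, smul_eq_mul] at h2
    nlinarith
  have hbd : Bornology.IsBounded {q | f q + g q ≤ 0} := by
    have hco : ContinuousOn (fun w => (φ (w - x))⁻¹ • (w - x) - e) P := by
      refine ContinuousOn.sub (ContinuousOn.smul (ContinuousOn.inv₀ (by fun_prop) ?_)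
        (by fun_prop)) continuousOn_const
      exact fun w hw => (hφ w hw).ne'
    obtain ⟨M, hM⟩ := isBounded_iff_forall_norm_le.1 (hcomp.image_of_continuousOn hco).isBounded
    refine isBounded_iff_forall_norm_le.2 ⟨M, fun q hq => ?_⟩
    have hq : f q + g q ≤ 0 := hq
    have ht := hfpos q hq
    have hP := (hmemP q (f q) ht).2 ⟨le_rfl, by linarith⟩
    refine hM (q : E) ⟨_, hP, ?_⟩
    have e1 : pt (f q) q - x = (f q)⁻¹ • (e + (q : E)) := by simp [pt]
    have e2 : φ (pt (f q) q - x) = (f q)⁻¹ := by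
      rw [e1, map_smul, map_add φ, he, hq0, add_zero, smul_eq_mul, mul_one]
    change (φ (pt (f q) q - x))⁻¹ • (pt (f q) q - x) - e = q
    rw [e2, e1, inv_inv, smul_smul, mul_inv_cancel₀ ht.ne', one_smul]
    abel
  have hA : ∀ i, ∃ q ∈ {q | f q + g q < 0}, ∀ k, k ≠ i → A k q + a k < A i q + a i := by
    intro i
    obtain ⟨p, hpP, hpi, hpk⟩ := exists_relint h hconv i
    obtain ⟨t, q, ht, rfl, -, -⟩ := hcoord p hpP
    have h1 := (hmemP q t ht).1 hpP
    have hi := (hAe i q t).2 ((hpe i t q ht).1 hpi)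
    refine ⟨q, ?_, fun k hk => ?_⟩
    · obtain ⟨j, hj⟩ := hg.ex q
      have hji : (j : ι) ≠ i := fun hh => by
        have h2 := j.2
        rw [hh] at h2
        exact lt_asymm h2 i.2
      have := (hBlt j q t).2 ((hplt j t q ht).1 (hpk j hji))
      change f q + g q < 0
      linarith [h1.1]
    · rw [hi]
      exact (hAlt k q t).2 ((hplt k t q ht).1 (hpk k fun hh => hk (Subtype.ext hh)))
  have hB : ∀ i, ∃ q ∈ {q | f q + g q < 0}, ∀ k, k ≠ i → B k q + b' k < B i q + b' i := by
    intro i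
    obtain ⟨p, hpP, hpi, hpk⟩ := exists_relint h hconv i
    obtain ⟨t, q, ht, rfl, -, -⟩ := hcoord p hpP
    have h1 := (hmemP q t ht).1 hpP
    have hi := (hBe i q t).2 ((hpe i t q ht).1 hpi)
    refine ⟨q, ?_, fun k hk => ?_⟩
    · obtain ⟨j, hj⟩ := hf.ex q
      have hji : (j : ι) ≠ i := fun hh => by
        have h2 := j.2
        rw [hh] at h2
        exact lt_asymm h2 i.2
      have := (hAlt j q t).2 ((hplt j t q ht).1 (hpk j hji))
      change f q + g q < 0
      linarith [h1.2]
    · rw [hi]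
      exact (hBlt k q t).2 ((hplt k t q ht).1 (hpk k fun hh => hk (Subtype.ext hh)))
  obtain ⟨q, hq, ⟨i₁, i₂, hi12, hi₁, hi₂⟩, ⟨j₁, j₂, hj12, hj₁, hj₂⟩, hdis⟩ :=
    exists_disjoint_crease hV hf hg hbd hA hB
  have ht1 := hfpos q hq.le
  have ht2 : 0 < -g q := by linarith
  have hvP := (hmemP q (f q) ht1).2 ⟨le_rfl, by linarith⟩
  have huP := (hmemP q (-g q) ht2).2 ⟨by linarith, by linarith⟩
  have hcol : Collinear ℝ {x, pt (-g q) q, pt (f q) q} := by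
    refine collinear_ray ((-g q)⁻¹ * f q) ?_
    simp only [pt, add_sub_cancel_left, smul_smul]
    rw [mul_assoc, mul_inv_cancel₀ ht1.ne', mul_one]
  have hvact : ∀ i, A i q + a i = f q → l i (pt (f q) q) = b i := fun i hi =>
    (hpe i _ q ht1).2 ((hAe i q _).1 hi)
  have huact : ∀ i, B i q + b' i = g q → l i (pt (-g q) q) = b i := fun i hi =>
    (hpe i _ q ht2).2 ((hBe i q _).1 (by rw [hi, neg_neg]))
  have hdisj : ∀ w ∈ P, (∀ k, l k (pt (-g q) q) = b k → l k w = b k) →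
      (∀ k, l k (pt (f q) q) = b k → l k w = b k) → False := by
    intro w hw h1 h2
    obtain ⟨t, qw, ht, rfl, -, -⟩ := hcoord w hw
    have hm := (hmemP qw t ht).1 hw
    have hAa : ∀ i, A i q + a i = f q → A i qw + a i = t := fun i hi =>
      (hAe i qw t).2 ((hpe i t qw ht).1 (h2 i (hvact i hi)))
    have hBa : ∀ i, B i q + b' i = g q → B i qw + b' i = -t := fun i hi =>
      (hBe i qw t).2 ((hpe i t qw ht).1 (h1 i (huact i hi)))
    have hft : f qw = t := le_antisymm hm.1 (hAa i₁ hi₁ ▸ hf.le i₁ qw)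
    have hgt : g qw = -t := le_antisymm hm.2 (hBa j₁ hj₁ ▸ hg.le j₁ qw)
    refine hdis qw (by rw [hft, hgt]; ring) (fun i hi => ?_) (fun i hi => ?_)
    · rw [hAa i hi, hft]
    · rw [hBa i hi, hgt]
  rcases condI_apply h hI huP hvP hcol hdisj with ⟨k, -, hk⟩ | ⟨k, -, hk⟩
  · have h1 : (j₁ : ι) = k := by
      by_contra hh
      exact (hk _ hh).ne (huact j₁ hj₁)
    have h2 : (j₂ : ι) = k := by
      by_contra hh
      exact (hk _ hh).ne (huact j₂ hj₂)
    exact hj12 (Subtype.ext (h1.trans h2.symm))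
  · have h1 : (i₁ : ι) = k := by
      by_contra hh
      exact (hk _ hh).ne (hvact i₁ hi₁)
    have h2 : (i₂ : ι) = k := by
      by_contra hh
      exact (hk _ hh).ne (hvact i₂ hi₂)
    exact hi12 (Subtype.ext (h1.trans h2.symm))

lemma hard_dir [Finite ι] (hd : 3 ≤ Module.finrank ℝ E) (h : HRep P l b Fa)
    (hconv : Convex ℝ P) (hcomp : IsCompact P) (hInt : (interior P).Nonempty)
    {x : E} (hxP : x ∉ P) (hI : CondI P x) :
    (∃ i₀, l i₀ x < b i₀ ∧ ∀ i, i ≠ i₀ → b i < l i x) ∨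
    (∃ i₀, b i₀ < l i₀ x ∧ ∀ i, i ≠ i₀ → l i x < b i) := by
  have hne := not_on_hull h hconv hcomp hxP hI
  have hneg : Nonempty {i // b i < l i x} := by
    by_contra hcon
    apply hxP
    rw [h.mem]
    intro i
    by_contra! hi
    exact hcon ⟨⟨i, hi⟩⟩
  have hpos : Nonempty {i // l i x < b i} := by
    by_contra hcon
    obtain ⟨y0, hy0⟩ := hInt
    have hy0P := interior_subset hy0
    have hray : ∀ r : ℝ, 0 ≤ r → y0 + r • (y0 - x) ∈ P := by
      intro r hr
      rw [h.mem]
      intro i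
      have h1 : b i ≤ l i x := by
        by_contra! hi
        exact hcon ⟨⟨i, hi⟩⟩
      have h2 := (h.mem y0).1 hy0P i
      simp only [map_add, map_smul, map_sub, smul_eq_mul]
      nlinarith
    obtain ⟨φ, m, hφx, hφP⟩ := geometric_hahn_banach_point_closed hconv hcomp.isClosed hxP
    have hφ : 0 < φ (y0 - x) := by rw [map_sub]; linarith [hφP y0 hy0P]
    obtain ⟨M, hM⟩ := (hcomp.image φ.continuous).bddAbove
    have h1 := hM (mem_image_of_mem φ hy0P)
    have h2 := hM (mem_image_of_mem φ (hray ((M - φ y0 + 1) / φ (y0 - x))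
      (div_nonneg (by linarith) hφ.le)))
    rw [map_add, map_smul, smul_eq_mul, div_mul_cancel₀ _ hφ.ne'] at h2
    linarith
  rcases subsingleton_or_nontrivial {i // l i x < b i} with hs | hn
  · left
    obtain ⟨i₀⟩ := hpos
    refine ⟨i₀, i₀.2, fun i hi => ?_⟩
    rcases lt_or_gt_of_ne (hne i) with hlt | hgt
    · exact absurd (congrArg Subtype.val (Subsingleton.elim (⟨i, hlt⟩ : {i // l i x < b i}) i₀)) hi
    · exact hgt
  · rcases subsingleton_or_nontrivial {i // b i < l i x} with hs' | hn'
    · right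
      obtain ⟨i₀⟩ := hneg
      refine ⟨i₀, i₀.2, fun i hi => ?_⟩
      rcases lt_or_gt_of_ne (hne i) with hlt | hgt
      · exact hlt
      · exact absurd
          (congrArg Subtype.val (Subsingleton.elim (⟨i, hgt⟩ : {i // b i < l i x}) i₀)) hi
    · exact (hard_case hd h hconv hcomp hInt hxP hne hI).elim

end Hard

/-- Lemma `lem:radon`, equivalence part. Let `𝒫 ⊂ ℝ^d` be a
full-dimensional polytope, `d ≥ 3`, and `x` a point in its exterior.  The
following are equivalent: (i) every line through `x` meeting two disjoint
(exposed) faces `F`, `G` of `𝒫` at `u ∈ F`, `v ∈ G` has `u` or `v` in the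
relative interior of a facet; (ii) `x` lies on no affine hull of a facet, and
`x` is beyond all facets except exactly one, or beneath all facets except
exactly one. -/
theorem line_interior_iff_beyond_beneath
    (d : ℕ) (hd : 3 ≤ d) (s : Finset (EuclideanSpace ℝ (Fin d)))
    (P : Set (EuclideanSpace ℝ (Fin d)))
    (hP : P = convexHull ℝ (s : Set (EuclideanSpace ℝ (Fin d))))
    (hdim : affineSpan ℝ P = ⊤)
    (x : EuclideanSpace ℝ (Fin d)) (hx : x ∉ P) :
    (∀ (F G : Set (EuclideanSpace ℝ (Fin d))) (u v : EuclideanSpace ℝ (Fin d)),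
        IsExposed ℝ P F → IsExposed ℝ P G → F ∩ G = ∅ →
        u ∈ F → v ∈ G → Collinear ℝ {x, u, v} →
        ((∃ H, IsFacet P H ∧ u ∈ intrinsicInterior ℝ H) ∨
          (∃ H, IsFacet P H ∧ v ∈ intrinsicInterior ℝ H)))
    ↔ ((∀ F, IsFacet P F → x ∉ affineSpan ℝ F) ∧
        ((∃ F₀, IsFacet P F₀ ∧ Beneath P F₀ x ∧
            ∀ F, IsFacet P F → F ≠ F₀ → Beyond P F x) ∨
          (∃ F₀, IsFacet P F₀ ∧ Beyond P F₀ x ∧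
            ∀ F, IsFacet P F → F ≠ F₀ → Beneath P F x))) := by
  have hE : Module.finrank ℝ (EuclideanSpace ℝ (Fin d)) = d := by simp
  have hfin : Finite {F : Set (EuclideanSpace ℝ (Fin d)) // IsFacet P F} := by
    subst hP; exact facets_finite s
  have hconv : Convex ℝ P := hP ▸ convex_convexHull ℝ _
  have hcomp : IsCompact P := hP ▸ s.finite_toSet.isCompact_convexHull ℝ
  have hInt : (interior P).Nonempty := hconv.interior_nonempty_iff_affineSpan_eq_top.2 hdim
  obtain ⟨l, b, h⟩ := exists_hrep (by omega) s hP hdim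
  have hbn := h.beneath_iff hInt
  have hby := h.beyond_iff hInt
  change CondI P x ↔ _
  constructor
  · intro hI
    refine ⟨fun F hF hm => not_on_hull h hconv hcomp hx hI ⟨F, hF⟩ ((h.aff ⟨F, hF⟩ x).1 hm), ?_⟩
    rcases hard_dir (by omega) h hconv hcomp hInt hx hI with ⟨i₀, h0, h1⟩ | ⟨i₀, h0, h1⟩
    · exact Or.inl ⟨i₀, i₀.2, (hbn i₀ x).2 h0, fun F hF hne =>
        (hby ⟨F, hF⟩ x).2 (h1 ⟨F, hF⟩ fun hh => hne (congrArg Subtype.val hh))⟩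
    · exact Or.inr ⟨i₀, i₀.2, (hby i₀ x).2 h0, fun F hF hne =>
        (hbn ⟨F, hF⟩ x).2 (h1 ⟨F, hF⟩ fun hh => hne (congrArg Subtype.val hh))⟩
  · rintro ⟨-, ⟨F₀, hF₀, -, h1⟩ | ⟨F₀, hF₀, -, h1⟩⟩
    · exact easy_dir h hx hconv (Or.inl ⟨⟨F₀, hF₀⟩, fun i hi =>
        (hby i x).1 (h1 i i.2 fun hh => hi (Subtype.ext hh))⟩)
    · exact easy_dir h hx hconv (Or.inr ⟨⟨F₀, hF₀⟩, fun i hi =>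
        (hbn i x).1 (h1 i i.2 fun hh => hi (Subtype.ext hh))⟩)

end BoydMaxwell
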